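/- arXiv:1404.1765 — 2 statements merged into one kernel-verified Lean document; each statement's English description precedes it below -/
import Mathlib

section
/- Let x ∈ Ω and set σ := (2/3)·∫_{ℝ³} k(‖z‖²)·‖z‖² dz. Then, as m → ∞ along the natural numbers, ∫_Ω m⁵·k(‖m·(x−y)‖²)·(φ(x)−φ(y))² dy converges to (σ/2)·‖∇φ(x)‖², where ∇φ(x) denotes the gradient of φ at x. -/
open MeasureTheory Filter

/-!
Substituting `y = x - c⁻¹ • z` turns the rescaled integral into the integral of the fixed kernel
against a power of the difference quotient `c • (φ x - φ (x - c⁻¹ • z))`. This quotient converges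
to `φ' z` and is at most `C * ‖z‖`, so by dominated convergence the limit is the integral of the
kernel against `‖φ' z‖ ^ p`. For `p = 2` and a radial kernel, that integral depends on the gradient
only through its norm, because reflections preserve Lebesgue measure; averaging it over an
orthonormal basis gives `1 / d` times the second moment of the kernel, `d` being the dimension.
-/

open Module
open scoped Topology NNReal RealInnerProductSpace

lemma integrable_mul_norm_pow_of_norm_le {α F G : Type*} [MeasurableSpace α] {μ : Measure α}
    [NormedAddCommGroup F] [NormedAddCommGroup G] {f : α → ℝ} {g : α → F} {h : α → G}
    {p : ℕ} (hp : p ≠ 0) (hf : Integrable (fun a => f a * ‖h a‖ ^ p) μ)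
    (hg : AEStronglyMeasurable g μ) (hh : AEStronglyMeasurable h μ) {C : ℝ≥0}
    (hgh : ∀ a, ‖g a‖ ≤ C * ‖h a‖) :
    Integrable (fun a => f a * ‖g a‖ ^ p) μ := by
  -- Only the product of `f` with `‖h‖ ^ p` is known to be measurable, so `‖g‖ ^ p` is written as
  -- `‖h‖ ^ p` times a bounded quotient.
  have hratio_meas : AEStronglyMeasurable (fun a => (‖g a‖ / ‖h a‖) ^ p) μ :=
    ((hg.norm.aemeasurable.div hh.norm.aemeasurable).pow_const p).aestronglyMeasurable
  have hratio_le : ∀ a, ‖(‖g a‖ / ‖h a‖) ^ p‖ ≤ (C : ℝ) ^ p := fun a => by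
    rw [Real.norm_of_nonneg (by positivity)]
    gcongr
    exact div_le_of_le_mul₀ (norm_nonneg _) C.coe_nonneg (hgh a)
  refine (hf.mul_bdd hratio_meas (ae_of_all _ hratio_le)).congr (ae_of_all _ fun a => ?_)
  by_cases ha : ‖h a‖ = 0
  · have hga : ‖g a‖ = 0 := le_antisymm (by simpa [ha] using hgh a) (norm_nonneg _)
    simp [hga, hp]
  · simp only [mul_assoc, ← mul_pow, mul_div_cancel₀ _ ha]

section BlowUp

variable {E F : Type*} [NormedAddCommGroup E] [NormedSpace ℝ E] [NormedAddCommGroup F]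
  [NormedSpace ℝ F] {Ω : Set E} {φ : E → F} {x : E}

/-- The blow-up of `φ` at `x` by the factor `c`: the difference quotient of `φ` between `x` and
`x - c⁻¹ • z`, as a function of the rescaled displacement `z`. It is set to zero where
`x - c⁻¹ • z` leaves `Ω`, so that integrals over `Ω` become integrals over the whole space. -/
noncomputable def blowUp (Ω : Set E) (φ : E → F) (x : E) (c : ℝ) (z : E) : F :=
  Ω.indicator (fun y => c • (φ x - φ y)) (x - c⁻¹ • z)

lemma norm_blowUp_le {C : ℝ≥0} (hC : ∀ y ∈ Ω, ‖φ x - φ y‖ ≤ C * ‖x - y‖) {c : ℝ} (hc : c ≠ 0)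
    (z : E) : ‖blowUp Ω φ x c z‖ ≤ C * ‖z‖ := by
  by_cases hz : x - c⁻¹ • z ∈ Ω
  · calc ‖blowUp Ω φ x c z‖ = ‖c‖ * ‖φ x - φ (x - c⁻¹ • z)‖ := by
          rw [blowUp, Set.indicator_of_mem hz, norm_smul]
      _ ≤ ‖c‖ * (C * ‖x - (x - c⁻¹ • z)‖) := by gcongr; exact hC _ hz
      _ = C * ‖z‖ := by
          rw [sub_sub_cancel, norm_smul, norm_inv, mul_left_comm,
            mul_inv_cancel_left₀ (norm_ne_zero_iff.2 hc)]
  · rw [blowUp, Set.indicator_of_notMem hz, norm_zero]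
    positivity

lemma tendsto_blowUp (hΩ : Ω ∈ 𝓝 x) {φ' : E →L[ℝ] F} (hφ : HasFDerivAt φ φ' x) (z : E) :
    Tendsto (fun c => blowUp Ω φ x c z) atTop (𝓝 (φ' z)) := by
  have hmem : ∀ᶠ c : ℝ in atTop, x - c⁻¹ • z ∈ Ω := by
    have : Tendsto (fun c : ℝ => x - c⁻¹ • z) atTop (𝓝 x) := by
      simpa using ((tendsto_inv_atTop_zero (𝕜 := ℝ)).smul_const z).const_sub x
    exact this hΩ
  have hquot : Tendsto (fun c : ℝ => c • (φ x - φ (x - c⁻¹ • z))) atTop (𝓝 (φ' z)) := by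
    simpa [smul_sub, ← sub_eq_add_neg] using (hφ.lim (-z) tendsto_norm_atTop_atTop).neg
  refine hquot.congr' ?_
  filter_upwards [hmem] with c hc
  rw [blowUp, Set.indicator_of_mem hc]

variable [FiniteDimensional ℝ E] [MeasurableSpace E] [BorelSpace E] {μ : Measure E}
  [μ.IsAddHaarMeasure]

lemma aestronglyMeasurable_blowUp (hΩ : MeasurableSet Ω)
    (hφ : AEStronglyMeasurable φ (μ.restrict Ω)) {c : ℝ} (hc : c ≠ 0) :
    AEStronglyMeasurable (blowUp Ω φ x c) μ := by
  have hind : AEStronglyMeasurable (Ω.indicator fun y => c • (φ x - φ y)) μ :=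
    (aestronglyMeasurable_indicator_iff hΩ).2
      ((aestronglyMeasurable_const.sub hφ).const_smul c)
  exact hind.comp_quasiMeasurePreserving
    ((quasiMeasurePreserving_sub_left_of_right_invariant μ x).comp
      (Measure.quasiMeasurePreserving_smul μ (inv_ne_zero hc)))

lemma integral_comp_sub_inv_smul {G : Type*} [NormedAddCommGroup G] [NormedSpace ℝ G]
    (f : E → G) (x : E) {c : ℝ} (hc : 0 ≤ c) :
    ∫ z, f (x - c⁻¹ • z) ∂μ = c ^ finrank ℝ E • ∫ y, f y ∂μ := by
  rw [Measure.integral_comp_inv_smul_of_nonneg μ (fun z => f (x - z)) hc,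
    integral_sub_left_eq_self f μ x]

lemma setIntegral_rescale_eq_integral_blowUp (K : E → ℝ) (hΩ : MeasurableSet Ω) {p : ℕ}
    (hp : p ≠ 0) {c : ℝ} (hc : 0 < c) :
    ∫ y in Ω, c ^ (finrank ℝ E + p) * K (c • (x - y)) * ‖φ x - φ y‖ ^ p ∂μ =
      ∫ z, K z * ‖blowUp Ω φ x c z‖ ^ p ∂μ := by
  set f : E → ℝ := Ω.indicator fun y => K (c • (x - y)) * ‖c • (φ x - φ y)‖ ^ p with hf
  calc ∫ y in Ω, c ^ (finrank ℝ E + p) * K (c • (x - y)) * ‖φ x - φ y‖ ^ p ∂μ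
      = c ^ finrank ℝ E • ∫ y, f y ∂μ := by
        rw [hf, integral_indicator hΩ, ← integral_smul]
        congr 1 with y
        rw [norm_smul, Real.norm_of_nonneg hc.le, smul_eq_mul]
        ring
    _ = ∫ z, f (x - c⁻¹ • z) ∂μ := (integral_comp_sub_inv_smul f x hc.le).symm
    _ = ∫ z, K z * ‖blowUp Ω φ x c z‖ ^ p ∂μ := by
        congr 1 with z
        by_cases hz : x - c⁻¹ • z ∈ Ω
        · rw [hf, blowUp, Set.indicator_of_mem hz, Set.indicator_of_mem hz, sub_sub_cancel,
            smul_inv_smul₀ hc.ne']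
        · rw [hf, blowUp, Set.indicator_of_notMem hz, Set.indicator_of_notMem hz, norm_zero,
            zero_pow hp, mul_zero]

theorem tendsto_setIntegral_rescale_mul_norm_sub_pow {K : E → ℝ} {p : ℕ} (hp : p ≠ 0)
    (hK : Integrable (fun z => K z * ‖z‖ ^ p) μ) (hΩ : MeasurableSet Ω) (hx : Ω ∈ 𝓝 x)
    (hφ : AEStronglyMeasurable φ (μ.restrict Ω)) {C : ℝ≥0}
    (hC : ∀ y ∈ Ω, ‖φ x - φ y‖ ≤ C * ‖x - y‖) {φ' : E →L[ℝ] F} (hφ' : HasFDerivAt φ φ' x) :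
    Tendsto
      (fun c : ℝ => ∫ y in Ω, c ^ (finrank ℝ E + p) * K (c • (x - y)) * ‖φ x - φ y‖ ^ p ∂μ)
      atTop (𝓝 (∫ z, K z * ‖φ' z‖ ^ p ∂μ)) := by
  have hrescale : ∀ᶠ c : ℝ in atTop, ∫ z, K z * ‖blowUp Ω φ x c z‖ ^ p ∂μ =
      ∫ y in Ω, c ^ (finrank ℝ E + p) * K (c • (x - y)) * ‖φ x - φ y‖ ^ p ∂μ := by
    filter_upwards [eventually_gt_atTop 0] with c hc
    exact (setIntegral_rescale_eq_integral_blowUp K hΩ hp hc).symm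
  refine Tendsto.congr' hrescale (tendsto_integral_filter_of_dominated_convergence
    (fun z => C ^ p * ‖K z * ‖z‖ ^ p‖) ?measurable ?bound (hK.norm.const_mul _) ?limit)
  case measurable =>
    filter_upwards [eventually_ne_atTop 0] with c hc
    exact (integrable_mul_norm_pow_of_norm_le hp hK (aestronglyMeasurable_blowUp hΩ hφ hc)
      aestronglyMeasurable_id (norm_blowUp_le hC hc)).aestronglyMeasurable
  case bound =>
    filter_upwards [eventually_ne_atTop 0] with c hc
    refine ae_of_all _ fun z => ?_
    calc ‖K z * ‖blowUp Ω φ x c z‖ ^ p‖ = ‖K z‖ * ‖blowUp Ω φ x c z‖ ^ p := by simp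
      _ ≤ ‖K z‖ * (C * ‖z‖) ^ p := by gcongr; exact norm_blowUp_le hC hc z
      _ = C ^ p * ‖K z * ‖z‖ ^ p‖ := by
          rw [norm_mul, norm_pow, norm_norm]
          ring
  case limit =>
    exact ae_of_all _ fun z => ((tendsto_blowUp hx hφ' z).norm.pow p).const_mul (K z)

end BlowUp

section Radial

variable {E : Type*} [NormedAddCommGroup E] [InnerProductSpace ℝ E] [FiniteDimensional ℝ E]
  [MeasurableSpace E] [BorelSpace E]

lemma integral_norm_inner_eq_of_norm_eq {G : Type*} [NormedAddCommGroup G] [NormedSpace ℝ G]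
    (f : ℝ → ℝ → G) {v w : E} (h : ‖v‖ = ‖w‖) :
    ∫ z : E, f ‖z‖ ⟪v, z⟫ = ∫ z : E, f ‖z‖ ⟪w, z⟫ := by
  set R : E ≃ₗᵢ[ℝ] E := (ℝ ∙ (v - w))ᗮ.reflection
  have hRv : R v = w := Submodule.reflection_sub h
  calc ∫ z : E, f ‖z‖ ⟪v, z⟫ = ∫ z : E, f ‖R z‖ ⟪w, R z⟫ := by
        simp only [← hRv, R.inner_map_map, R.norm_map]
    _ = ∫ z : E, f ‖z‖ ⟪w, z⟫ :=
        R.measurePreserving.integral_comp R.toMeasurableEquiv.measurableEmbedding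
          fun z => f ‖z‖ ⟪w, z⟫

lemma finrank_mul_integral_radial_mul_inner_sq {f : ℝ → ℝ}
    (hf : Integrable fun z : E => f ‖z‖ * ‖z‖ ^ 2) (v : E) :
    finrank ℝ E * ∫ z : E, f ‖z‖ * ⟪v, z⟫ ^ 2 = ‖v‖ ^ 2 * ∫ z : E, f ‖z‖ * ‖z‖ ^ 2 := by
  let b := stdOrthonormalBasis ℝ E
  have hint (w : E) : Integrable fun z : E => f ‖z‖ * ⟪w, z⟫ ^ 2 := by
    simpa only [Real.norm_eq_abs, sq_abs] using
      integrable_mul_norm_pow_of_norm_le (C := ‖w‖₊) two_ne_zero hf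
        (by fun_prop : Continuous fun z : E => ⟪w, z⟫).aestronglyMeasurable
        aestronglyMeasurable_id (norm_inner_le_norm w)
  calc finrank ℝ E * ∫ z : E, f ‖z‖ * ⟪v, z⟫ ^ 2
      = ∑ _i : Fin (finrank ℝ E), ∫ z : E, f ‖z‖ * ⟪v, z⟫ ^ 2 := by simp
    _ = ∑ i, ∫ z : E, f ‖z‖ * ⟪‖v‖ • b i, z⟫ ^ 2 :=
        Finset.sum_congr rfl fun i _ =>
          integral_norm_inner_eq_of_norm_eq (fun r s => f r * s ^ 2) (by simp [norm_smul])
    _ = ∫ z : E, ∑ i, f ‖z‖ * ⟪‖v‖ • b i, z⟫ ^ 2 :=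
        (integral_finsetSum _ fun i _ => hint _).symm
    _ = ∫ z : E, ‖v‖ ^ 2 * (f ‖z‖ * ‖z‖ ^ 2) := by
        congr 1 with z
        simp only [real_inner_smul_left, mul_pow, ← Finset.mul_sum, b.sum_sq_inner_right]
        ring
    _ = ‖v‖ ^ 2 * ∫ z : E, f ‖z‖ * ‖z‖ ^ 2 := integral_const_mul _ _

end Radial

lemma integrable_comp_norm_mul_norm_pow {E : Type*} [NormedAddCommGroup E] [ProperSpace E]
    [MeasurableSpace E] [BorelSpace E] {μ : Measure E} [IsFiniteMeasureOnCompacts μ]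
    {f : ℝ → ℝ} (hf : Measurable f) {B R : ℝ} (hB : ∀ r, ‖f r‖ ≤ B)
    (hR : ∀ r, R < r → f r = 0) (p : ℕ) :
    Integrable (fun z : E => f ‖z‖ * ‖z‖ ^ p) μ := by
  have hsupp : Function.support (fun z : E => f ‖z‖ * ‖z‖ ^ p) ⊆ Metric.closedBall 0 R := by
    intro z hz
    rw [mem_closedBall_zero_iff]
    exact not_lt.1 fun h => left_ne_zero_of_mul hz (hR _ h)
  have hmeas : Measurable fun z : E => f ‖z‖ * ‖z‖ ^ p :=
    (hf.comp measurable_norm).mul (measurable_norm.pow_const p)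
  rw [← integrableOn_iff_integrable_of_support_subset hsupp]
  refine .of_bound measure_closedBall_lt_top hmeas.aestronglyMeasurable (B * R ^ p) ?_
  filter_upwards [ae_restrict_mem measurableSet_closedBall] with z hz
  rw [mem_closedBall_zero_iff] at hz
  rw [norm_mul, norm_pow, norm_norm]
  exact mul_le_mul (hB _) (by gcongr) (by positivity) ((norm_nonneg _).trans (hB 0))

theorem stmt3_general {E : Type*} [NormedAddCommGroup E] [InnerProductSpace ℝ E]
    [FiniteDimensional ℝ E] [Nontrivial E] [MeasurableSpace E] [BorelSpace E] {Ω : Set E}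
    (hΩ : MeasurableSet Ω) {x : E} (hx : Ω ∈ 𝓝 x) {k : ℝ → ℝ}
    (hk : Integrable fun z : E => k (‖z‖ ^ 2) * ‖z‖ ^ 2) {φ : E → ℝ}
    (hφ : AEStronglyMeasurable φ (volume.restrict Ω)) {C : ℝ≥0}
    (hC : ∀ y ∈ Ω, ‖φ x - φ y‖ ≤ C * ‖x - y‖) (hφdiff : DifferentiableAt ℝ φ x) {σ : ℝ}
    (hσ : σ = (2 / finrank ℝ E) * ∫ z : E, k (‖z‖ ^ 2) * ‖z‖ ^ 2) :
    Tendsto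
      (fun c : ℝ => ∫ y in Ω, c ^ (finrank ℝ E + 2) * k (‖c • (x - y)‖ ^ 2) * (φ x - φ y) ^ 2)
      atTop (𝓝 ((σ / 2) * ‖gradient φ x‖ ^ 2)) := by
  have hlim : (σ / 2) * ‖gradient φ x‖ ^ 2 =
      ∫ z : E, k (‖z‖ ^ 2) * ⟪gradient φ x, z⟫ ^ 2 := by
    have hd : (finrank ℝ E : ℝ) ≠ 0 := Nat.cast_ne_zero.2 finrank_pos.ne'
    refine mul_left_cancel₀ hd ?_
    rw [finrank_mul_integral_radial_mul_inner_sq (f := fun r => k (r ^ 2)) hk, hσ]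
    field_simp
  rw [hlim]
  simpa only [Real.norm_eq_abs, sq_abs, InnerProductSpace.toDual_apply_apply] using
    tendsto_setIntegral_rescale_mul_norm_sub_pow (K := fun z => k (‖z‖ ^ 2)) two_ne_zero hk hΩ hx
      hφ hC hφdiff.hasGradientAt.hasFDerivAt

/-- with `σ = (2/3)·∫_{ℝ³} k(‖z‖²)·‖z‖² dz`, as `m → ∞`,
`∫_Ω m⁵·k(‖m(x−y)‖²)·(φ(x)−φ(y))² dy → (σ/2)·‖∇φ(x)‖²`. -/
theorem stmt3 (Ω : Set (EuclideanSpace ℝ (Fin 3))) (hΩopen : IsOpen Ω)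
    (hΩbdd : Bornology.IsBounded Ω)
    (k : ℝ → ℝ) (hkmeas : Measurable k) (hknonneg : ∀ t, 0 ≤ k t)
    (M : ℝ) (hkbdd : ∀ t, k t ≤ M) (hksupp : ∀ t : ℝ, 1 < t → k t = 0)
    (φ : EuclideanSpace ℝ (Fin 3) → ℝ) (L : NNReal) (hφlip : LipschitzWith L φ)
    (x : EuclideanSpace ℝ (Fin 3)) (hx : x ∈ Ω) (hφdiff : DifferentiableAt ℝ φ x)
    (σ : ℝ)
    (hσ : σ = (2 / 3) * ∫ z : EuclideanSpace ℝ (Fin 3), k (‖z‖ ^ 2) * ‖z‖ ^ 2) :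
    Tendsto
      (fun m : ℕ => ∫ y in Ω, (m : ℝ) ^ 5 * k (‖(m : ℝ) • (x - y)‖ ^ 2) * (φ x - φ y) ^ 2)
      atTop (nhds ((σ / 2) * ‖gradient φ x‖ ^ 2)) := by
  have hk : Integrable fun z : EuclideanSpace ℝ (Fin 3) => k (‖z‖ ^ 2) * ‖z‖ ^ 2 :=
    integrable_comp_norm_mul_norm_pow (f := fun r => k (r ^ 2)) (R := 1) (by fun_prop)
      (fun r => (Real.norm_of_nonneg (hknonneg _)).trans_le (hkbdd _))
      (fun r hr => hksupp _ (one_lt_pow₀ hr two_ne_zero)) 2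
  simpa [Function.comp_def] using (stmt3_general hΩopen.measurableSet (hΩopen.mem_nhds hx) hk
    hφlip.continuous.aestronglyMeasurable (fun y _ => hφlip.norm_sub_le x y) hφdiff
    (by simpa using hσ)).comp tendsto_natCast_atTop_atTop
end

section
/- There exists a constant C > 0 such that for every continuously differentiable function v : ℝ³ → ℝ with compact support, the Gagliardo–Nirenberg interpolation inequality ‖v‖_{L³(ℝ³)} ≤ C·‖v‖_{L²(ℝ³)}^{1/2}·‖Dv‖_{L²(ℝ³)}^{1/2} holds, where Dv denotes the (Fréchet) derivative of v and ‖Dv‖_{L²(ℝ³)} is the L² norm of x ↦ ‖Dv(x)‖. -/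
open MeasureTheory

/-! By the Lyapunov inequality, the logarithm of the `Lʳ` norm is convex in `1 / r`. The Sobolev
inequality bounds the `Lᵖ'` norm of a compactly supported `C¹` function by a multiple of the `Lᵖ`
norm of its derivative, where `1 / p' = 1 / p - 1 / n`. Interpolating `Lʳ` between `L^q` and `Lᵖ'`
gives the Gagliardo–Nirenberg inequality; on `ℝ³` with `p = q = 2`, one has `p' = 6`, and
`1 / 3` is the midpoint of `1 / 2` and `1 / 6`.
-/

open Module
open scoped ENNReal NNReal

section Interpolation

variable {α F : Type*} [MeasurableSpace α] {μ : Measure α} [NormedAddCommGroup F] {f : α → F}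

theorem eLpNorm_norm_rpow_div {p : ℝ≥0∞} {a : ℝ≥0} (ha : a ≠ 0) :
    eLpNorm (fun x ↦ ‖f x‖ ^ (a : ℝ)) (p / a) μ = eLpNorm f p μ ^ (a : ℝ) := by
  rw [eLpNorm_norm_rpow f (by positivity), ENNReal.ofReal_coe_nnreal,
    ENNReal.div_mul_cancel (by simpa using ha) (by simp)]

theorem eLpNorm_le_eLpNorm_rpow_mul_eLpNorm_rpow {p q r : ℝ≥0∞} {a b : ℝ≥0} (hab : a + b = 1)
    (hr : r⁻¹ = a * p⁻¹ + b * q⁻¹) (hf : AEStronglyMeasurable f μ) :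
    eLpNorm f r μ ≤ eLpNorm f p μ ^ (a : ℝ) * eLpNorm f q μ ^ (b : ℝ) := by
  rcases eq_or_ne a 0 with rfl | ha
  · obtain rfl : b = 1 := by simpa using hab
    obtain rfl : r = q := by simpa using hr
    simp
  rcases eq_or_ne b 0 with rfl | hb
  · obtain rfl : a = 1 := by simpa using hab
    obtain rfl : r = p := by simpa using hr
    simp
  have hpqr : ENNReal.HolderTriple (p / a) (q / b) r := ⟨by
    rw [ENNReal.inv_div (by simp) (by simp [ha]), ENNReal.inv_div (by simp) (by simp [hb]), hr,
      div_eq_mul_inv, div_eq_mul_inv]⟩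
  have norm_split (x : α) : ‖f x‖ = ‖f x‖ ^ (a : ℝ) * ‖f x‖ ^ (b : ℝ) := by
    rw [← Real.rpow_add_of_nonneg (norm_nonneg _) a.coe_nonneg b.coe_nonneg, ← NNReal.coe_add, hab,
      NNReal.coe_one, Real.rpow_one]
  have measurable_norm_rpow (c : ℝ) : AEStronglyMeasurable (fun x ↦ ‖f x‖ ^ c) μ :=
    (hf.norm.aemeasurable.pow_const c).aestronglyMeasurable
  calc eLpNorm f r μ
      = eLpNorm ((fun x ↦ ‖f x‖ ^ (a : ℝ)) • fun x ↦ ‖f x‖ ^ (b : ℝ)) r μ :=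
        (eLpNorm_norm f).symm.trans (congrArg (eLpNorm · r μ) (funext norm_split))
    _ ≤ eLpNorm (fun x ↦ ‖f x‖ ^ (a : ℝ)) (p / a) μ *
          eLpNorm (fun x ↦ ‖f x‖ ^ (b : ℝ)) (q / b) μ :=
        eLpNorm_smul_le_mul_eLpNorm (measurable_norm_rpow b) (measurable_norm_rpow a)
    _ = eLpNorm f p μ ^ (a : ℝ) * eLpNorm f q μ ^ (b : ℝ) := by
        rw [eLpNorm_norm_rpow_div ha, eLpNorm_norm_rpow_div hb]

theorem eLpNorm_nnreal_eq_ofReal_integral_norm_rpow {p : ℝ≥0} (hp : p ≠ 0) (hf : MemLp f p μ) :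
    eLpNorm f p μ = ENNReal.ofReal ((∫ x, ‖f x‖ ^ (p : ℝ) ∂μ) ^ (1 / (p : ℝ))) := by
  rw [hf.eLpNorm_eq_integral_rpow_norm (by simpa using hp) (by simp), ENNReal.coe_toReal, one_div]

end Interpolation

section GagliardoNirenberg

variable {E F : Type*} [NormedAddCommGroup E] [NormedSpace ℝ E] [FiniteDimensional ℝ E]
  [MeasurableSpace E] [BorelSpace E] [NormedAddCommGroup F] [InnerProductSpace ℝ F]
  (μ : Measure E) [μ.IsAddHaarMeasure]

theorem eLpNorm_le_eLpNorm_rpow_mul_eLpNorm_fderiv_rpow {u : E → F} (hu : ContDiff ℝ 1 u)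
    (h2u : HasCompactSupport u) {p p' : ℝ≥0} (hp : 1 ≤ p) (hn : 0 < finrank ℝ E)
    (hp' : (p' : ℝ)⁻¹ = (p : ℝ)⁻¹ - (finrank ℝ E : ℝ)⁻¹) {q r : ℝ≥0∞} {a b : ℝ≥0}
    (hab : a + b = 1) (hr : r⁻¹ = a * q⁻¹ + b * (p' : ℝ≥0∞)⁻¹) :
    eLpNorm u r μ ≤ (eLpNormLESNormFDerivOfEqInnerConst μ p : ℝ≥0∞) ^ (b : ℝ) *
      eLpNorm u q μ ^ (a : ℝ) * eLpNorm (fderiv ℝ u) p μ ^ (b : ℝ) := by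
  set K := eLpNormLESNormFDerivOfEqInnerConst μ p
  calc eLpNorm u r μ
      ≤ eLpNorm u q μ ^ (a : ℝ) * eLpNorm u p' μ ^ (b : ℝ) :=
        eLpNorm_le_eLpNorm_rpow_mul_eLpNorm_rpow hab hr
          (hu.continuous.memLp_of_hasCompactSupport (p := p') h2u).1
    _ ≤ eLpNorm u q μ ^ (a : ℝ) * (K * eLpNorm (fderiv ℝ u) p μ) ^ (b : ℝ) := by
        gcongr
        exact eLpNorm_le_eLpNorm_fderiv_of_eq_inner μ hu h2u hp hn hp'
    _ = K ^ (b : ℝ) * eLpNorm u q μ ^ (a : ℝ) * eLpNorm (fderiv ℝ u) p μ ^ (b : ℝ) := by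
        rw [ENNReal.mul_rpow_of_nonneg _ _ b.coe_nonneg]
        ring

theorem integral_norm_rpow_le_mul_integral_norm_fderiv_rpow {u : E → F} (hu : ContDiff ℝ 1 u)
    (h2u : HasCompactSupport u) {p p' q r : ℝ≥0} (hp : 1 ≤ p) (hn : 0 < finrank ℝ E)
    (hp' : (p' : ℝ)⁻¹ = (p : ℝ)⁻¹ - (finrank ℝ E : ℝ)⁻¹) (hp'₀ : p' ≠ 0) (hq : q ≠ 0)
    {a b : ℝ≥0} (hab : a + b = 1) (hr : r⁻¹ = a * q⁻¹ + b * p'⁻¹) :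
    (∫ x, ‖u x‖ ^ (r : ℝ) ∂μ) ^ (1 / (r : ℝ)) ≤
      (eLpNormLESNormFDerivOfEqInnerConst μ p : ℝ) ^ (b : ℝ) *
        ((∫ x, ‖u x‖ ^ (q : ℝ) ∂μ) ^ (1 / (q : ℝ))) ^ (a : ℝ) *
        ((∫ x, ‖fderiv ℝ u x‖ ^ (p : ℝ) ∂μ) ^ (1 / (p : ℝ))) ^ (b : ℝ) := by
  have hr₀ : r ≠ 0 := by
    rintro rfl
    obtain ⟨rfl, rfl⟩ : a = 0 ∧ b = 0 := by simpa [hq, hp'₀, eq_comm] using hr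
    simp at hab
  have memLp_u (s : ℝ≥0) : MemLp u s μ := hu.continuous.memLp_of_hasCompactSupport h2u
  have memLp_fderiv : MemLp (fderiv ℝ u) p μ :=
    (hu.continuous_fderiv one_ne_zero).memLp_of_hasCompactSupport (h2u.fderiv ℝ)
  have hr' : (r : ℝ≥0∞)⁻¹ = a * (q : ℝ≥0∞)⁻¹ + b * (p' : ℝ≥0∞)⁻¹ := by
    rw [← ENNReal.coe_inv hr₀, ← ENNReal.coe_inv hq, ← ENNReal.coe_inv hp'₀]
    exact_mod_cast hr
  have h := eLpNorm_le_eLpNorm_rpow_mul_eLpNorm_fderiv_rpow μ hu h2u hp hn hp' hab hr'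
  rwa [eLpNorm_nnreal_eq_ofReal_integral_norm_rpow hr₀ (memLp_u r),
    eLpNorm_nnreal_eq_ofReal_integral_norm_rpow hq (memLp_u q),
    eLpNorm_nnreal_eq_ofReal_integral_norm_rpow (by positivity) memLp_fderiv,
    ← ENNReal.ofReal_coe_nnreal, ENNReal.ofReal_rpow_of_nonneg (by positivity) b.coe_nonneg,
    ENNReal.ofReal_rpow_of_nonneg (by positivity) a.coe_nonneg,
    ENNReal.ofReal_rpow_of_nonneg (by positivity) b.coe_nonneg,
    ← ENNReal.ofReal_mul (by positivity), ← ENNReal.ofReal_mul (by positivity),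
    ENNReal.ofReal_le_ofReal_iff (by positivity)] at h

theorem stmt12_general {p q r a b : ℝ} (hp : 1 ≤ p) (hpn : p < finrank ℝ E) (hq : 0 < q)
    (ha : 0 ≤ a) (hb : 0 ≤ b) (hab : a + b = 1)
    (hr : r⁻¹ = a * q⁻¹ + b * (p⁻¹ - (finrank ℝ E : ℝ)⁻¹)) :
    ∃ C : ℝ, 0 < C ∧ ∀ v : E → F, ContDiff ℝ 1 v → HasCompactSupport v →
      (∫ x, ‖v x‖ ^ r ∂μ) ^ (1 / r) ≤
        C * ((∫ x, ‖v x‖ ^ q ∂μ) ^ (1 / q)) ^ a *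
          ((∫ x, ‖fderiv ℝ v x‖ ^ p ∂μ) ^ (1 / p)) ^ b := by
  have hinv : 0 < p⁻¹ - (finrank ℝ E : ℝ)⁻¹ :=
    sub_pos.2 (inv_strictAnti₀ (zero_lt_one.trans_le hp) hpn)
  have hr₀ : 0 ≤ r := inv_nonneg.1 (by rw [hr]; positivity)
  have hn : 0 < finrank ℝ E := by exact_mod_cast zero_lt_one.trans_le (hp.trans hpn.le)
  lift p to ℝ≥0 using zero_le_one.trans hp
  lift q to ℝ≥0 using hq.le
  lift r to ℝ≥0 using hr₀
  lift a to ℝ≥0 using ha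
  lift b to ℝ≥0 using hb
  obtain ⟨p', hp'⟩ : ∃ p' : ℝ≥0, (p' : ℝ)⁻¹ = (p : ℝ)⁻¹ - (finrank ℝ E : ℝ)⁻¹ :=
    ⟨⟨_, (inv_pos.2 hinv).le⟩, inv_inv _⟩
  have hp'₀ : p' ≠ 0 := by
    rintro rfl
    simp [← hp'] at hinv
  rw [← hp'] at hr
  set K := eLpNormLESNormFDerivOfEqInnerConst μ p
  refine ⟨(K + 1) ^ (b : ℝ), by positivity, fun v hv h2v ↦ ?_⟩
  calc (∫ x, ‖v x‖ ^ (r : ℝ) ∂μ) ^ (1 / (r : ℝ))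
      ≤ (K : ℝ) ^ (b : ℝ) * ((∫ x, ‖v x‖ ^ (q : ℝ) ∂μ) ^ (1 / (q : ℝ))) ^ (a : ℝ) *
          ((∫ x, ‖fderiv ℝ v x‖ ^ (p : ℝ) ∂μ) ^ (1 / (p : ℝ))) ^ (b : ℝ) :=
        integral_norm_rpow_le_mul_integral_norm_fderiv_rpow μ hv h2v (mod_cast hp) hn hp' hp'₀
          (mod_cast hq.ne') (mod_cast hab) (mod_cast hr)
    _ ≤ _ := by
        gcongr
        exact le_add_of_nonneg_right zero_le_one

end GagliardoNirenberg

/-- Gagliardo–Nirenberg: there is `C > 0` such that for every `C¹`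
compactly supported `v : ℝ³ → ℝ`,
`‖v‖_{L³} ≤ C·‖v‖_{L²}^{1/2}·‖Dv‖_{L²}^{1/2}`. -/
theorem stmt12 :
    ∃ C : ℝ, 0 < C ∧
      ∀ v : EuclideanSpace ℝ (Fin 3) → ℝ, ContDiff ℝ 1 v → HasCompactSupport v →
        (∫ x : EuclideanSpace ℝ (Fin 3), |v x| ^ (3 : ℝ)) ^ ((1 : ℝ) / 3)
          ≤ C * ((∫ x : EuclideanSpace ℝ (Fin 3), |v x| ^ (2 : ℝ)) ^ ((1 : ℝ) / 2)) ^ ((1 : ℝ) / 2)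
              * ((∫ x : EuclideanSpace ℝ (Fin 3), ‖fderiv ℝ v x‖ ^ (2 : ℝ)) ^ ((1 : ℝ) / 2)) ^ ((1 : ℝ) / 2) := by
  apply stmt12_general volume <;> norm_num [finrank_euclideanSpace]
end
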